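/- arXiv:1410.6081 — 2 statements merged into one kernel-verified Lean document; each statement's English description precedes it below -/
import Mathlib

section
/- 𝔱_Θ = 𝔱: the least cardinality of a ⊆*-chain of thick subsets of ℕ with no thick ⊆*-lower bound equals the least cardinality of a ⊆*-chain of infinite subsets of ℕ with no infinite pseudo-intersection. -/
/-!
Pulling a `⊆*`-chain of infinite sets back along `Nat.sqrt`, whose fibres are longer and longer
intervals, gives a chain of thick sets, and the image under `Nat.sqrt` of a thick lower bound of the
latter is an infinite lower bound of the former. Hence `𝔱_Θ ≤ 𝔱`.

Conversely, let `C` be a chain of fewer than `𝔱` thick sets. For each `k`, the sets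
`{m | [m, m + k] ⊆ A}`, `A ∈ C`, form a chain of infinite sets, so they have an infinite
pseudo-intersection `P k`; let `f A k` be a bound beyond which every `m ∈ P k` satisfies
`[m, m + k] ⊆ A`. Since `𝔱 ≤ 𝔥 ≤ 𝔟`, one function `g` eventually dominates every `f A`. Choosing
`m k ∈ P k` above `g k`, the union of the intervals `[m k, m k + k]` is a thick lower bound of `C`.
-/

open Filter Set Topology

noncomputable section

/-- `βℕ`: the space of ultrafilters on `ℕ` (the Stone–Čech compactification of `ℕ`). -/
abbrev βN := Ultrafilter ℕ

/-- `ℕ* = βℕ ∖ ℕ`: the free (nonprincipal) ultrafilters, i.e. those containing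
every cofinite set. -/
def NStar : Set βN := {p | (p : Filter ℕ) ≤ Filter.cofinite}

/-- The shift map `σ : βℕ → βℕ`, the pushforward under `n ↦ n + 1`. -/
def shift (p : βN) : βN := p.map (· + 1)

/-- Addition on `βℕ`: `A ∈ p + q ↔ {n | A − n ∈ p} ∈ q`, where `A − n = {m | m + n ∈ A}`. -/
def addU (p q : βN) : βN := q.bind fun n => p.map (· + n)

/-- A right ideal of `(βℕ, +)`: `I + βℕ ⊆ I`. -/
def IsRightIdeal (I : Set βN) : Prop := ∀ p ∈ I, ∀ q : βN, addU p q ∈ I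

/-- A minimal right ideal: a nonempty right ideal not properly containing any
other (nonempty) right ideal. -/
def IsMinRightIdeal (I : Set βN) : Prop :=
  I.Nonempty ∧ IsRightIdeal I ∧
    ∀ J : Set βN, J.Nonempty → IsRightIdeal J → J ⊆ I → J = I

/-- `A* = {p ∈ ℕ* | A ∈ p}`, as a subset of the subspace `ℕ*`. -/
def starSet (A : Set ℕ) : Set ↥NStar := {p | A ∈ (p : βN)}

/-- `F* = ⋂_{A ∈ F} A*` for a (free) filter `F` on `ℕ`. -/
def filterStar (F : Filter ℕ) : Set βN := ⋂ A ∈ F, {p : βN | A ∈ p}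

/-- A closed `P`-set of the space `ℕ*`: for every countable collection of open
sets containing `X`, `X` is contained in the interior of the intersection. -/
def IsPSetSub (X : Set ↥NStar) : Prop :=
  IsClosed X ∧ ∀ 𝒜 : Set (Set ↥NStar), 𝒜.Countable →
    (∀ U ∈ 𝒜, IsOpen U ∧ X ⊆ U) → X ⊆ interior (⋂₀ 𝒜)

/-- A subset of `βℕ` which lies in `ℕ*` and is a closed `P`-set of `ℕ*`. -/
def IsPSetIn (X : Set βN) : Prop :=
  X ⊆ NStar ∧ IsPSetSub (Subtype.val ⁻¹' X)

/-- `A ⊆ ℕ` is thick if it contains arbitrarily long intervals. -/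
def Thick (A : Set ℕ) : Prop := ∀ k : ℕ, ∃ n : ℕ, Set.Icc n (n + k) ⊆ A

/-- `A ⊆* B`: `A ∖ B` is finite. -/
def almostSub (A B : Set ℕ) : Prop := (A \ B).Finite

/-- The tower number `𝔱`: the least cardinality of a `⊆*`-chain of infinite subsets
of `ℕ` with no infinite pseudo-intersection. -/
def towerNum : Cardinal :=
  sInf {c : Cardinal | ∃ C : Set (Set ℕ), c = Cardinal.mk ↥C ∧ (∀ A ∈ C, A.Infinite) ∧
    IsChain almostSub C ∧ ¬∃ B : Set ℕ, B.Infinite ∧ ∀ A ∈ C, almostSub B A}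

/-- `𝔱_Θ`: the least cardinality of a `⊆*`-chain of thick subsets of `ℕ` with no
thick `⊆*`-lower bound. -/
def towerNumTheta : Cardinal :=
  sInf {c : Cardinal | ∃ C : Set (Set ℕ), c = Cardinal.mk ↥C ∧ (∀ A ∈ C, Thick A) ∧
    IsChain almostSub C ∧ ¬∃ B : Set ℕ, Thick B ∧ ∀ A ∈ C, almostSub B A}

/-- The pseudo-intersection number `𝔭`: the least cardinality of a filter base of
infinite subsets of `ℕ` (all finite intersections infinite) with no infinite
pseudo-intersection. -/
def pNum : Cardinal :=
  sInf {c : Cardinal | ∃ C : Set (Set ℕ), c = Cardinal.mk ↥C ∧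
    (∀ S : Finset (Set ℕ), ↑S ⊆ C → (⋂ A ∈ S, A : Set ℕ).Infinite) ∧
    ¬∃ B : Set ℕ, B.Infinite ∧ ∀ A ∈ C, almostSub B A}

/-- Chain transitivity for a dynamical system on a topological space, via open
covers: for every open cover `𝒰` and all `x, y` there is a `𝒰`-chain from `x` to `y`. -/
def ChainTransitive {X : Type*} [TopologicalSpace X] (f : X → X) : Prop :=
  ∀ 𝒰 : Set (Set X), (∀ U ∈ 𝒰, IsOpen U) → ⋃₀ 𝒰 = Set.univ →
    ∀ x y : X, ∃ (n : ℕ) (c : ℕ → X), c 0 = x ∧ c n = y ∧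
      ∀ i < n, ∃ U ∈ 𝒰, f (c i) ∈ U ∧ c (i + 1) ∈ U

lemma shift_mem_NStar {p : βN} (hp : p ∈ NStar) : shift p ∈ NStar := by
  have h1 : Filter.Tendsto (· + 1) Filter.cofinite Filter.cofinite :=
    Function.Injective.tendsto_cofinite (add_left_injective 1)
  simp only [NStar, Set.mem_setOf_eq, shift, Ultrafilter.coe_map] at *
  exact (Filter.map_mono hp).trans h1

/-- The shift map restricted to `ℕ*`. -/
def shiftStar (p : ↥NStar) : ↥NStar := ⟨shift p.1, shift_mem_NStar p.2⟩

open Cardinal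

lemma exists_family_of_wellFoundedLT {ι α : Type*} [LT ι] [WellFoundedLT ι] [Nonempty α]
    (P : ι → α → Prop) (s : α → α → Prop)
    (h : ∀ i (T : ι → α), (∀ j < i, P j (T j)) → (∀ k < i, ∀ j < k, s (T j) (T k)) →
      ∃ x, P i x ∧ ∀ j < i, s (T j) x) :
    ∃ T : ι → α, (∀ i, P i (T i)) ∧ ∀ i, ∀ j < i, s (T j) (T i) := by
  let T : ι → α := wellFounded_lt.fix fun i prev =>
    Classical.epsilon fun x => P i x ∧ ∀ j (hj : j < i), s (prev j hj) x
  have hT_eq (i : ι) : T i = Classical.epsilon fun x => P i x ∧ ∀ j < i, s (T j) x :=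
    wellFounded_lt.fix_eq _ i
  have hT (i : ι) : P i (T i) ∧ ∀ j < i, s (T j) (T i) := by
    induction i using WellFoundedLT.induction with
    | ind i ih =>
      rw [hT_eq i]
      exact Classical.epsilon_spec (h i T (fun j hj => (ih j hj).1) fun k hk => (ih k hk).2)
  exact ⟨T, fun i => (hT i).1, fun i => (hT i).2⟩

section AlmostSub

variable {A B C : Set ℕ} {f : ℕ → ℕ}

lemma almostSub_iff_eventually_cofinite : almostSub A B ↔ ∀ᶠ n in cofinite, n ∈ A → n ∈ B := by
  rw [eventually_cofinite]
  simp only [Classical.not_imp]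
  rfl

lemma almostSub_iff_eventually_atTop : almostSub A B ↔ ∀ᶠ n in atTop, n ∈ A → n ∈ B := by
  rw [almostSub_iff_eventually_cofinite, Nat.cofinite_eq_atTop]

lemma almostSub_of_subset (h : A ⊆ B) : almostSub A B :=
  almostSub_iff_eventually_cofinite.2 (.of_forall h)

lemma almostSub.trans (hAB : almostSub A B) (hBC : almostSub B C) : almostSub A C := by
  rw [almostSub_iff_eventually_cofinite] at *
  filter_upwards [hAB, hBC] with n hn hn' using hn' ∘ hn

lemma almostSub.preimage (h : almostSub A B) (hf : Tendsto f cofinite cofinite) :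
    almostSub (f ⁻¹' A) (f ⁻¹' B) :=
  almostSub_iff_eventually_cofinite.2 (hf.eventually (almostSub_iff_eventually_cofinite.1 h))

lemma almostSub.image_left (h : almostSub A (f ⁻¹' B)) : almostSub (f '' A) B := by
  rw [almostSub, ← image_sdiff_preimage]
  exact Set.Finite.image f h

lemma almostSub_iUnion_of_eventually_subset {ι : Type*} {s : ι → Set ℕ}
    (hfin : ∀ i, (s i).Finite) (h : ∀ᶠ i in cofinite, s i ⊆ A) : almostSub (⋃ i, s i) A := by
  refine ((eventually_cofinite.1 h).biUnion fun i _ => hfin i).subset ?_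
  rintro x ⟨hx, hxA⟩
  obtain ⟨i, hi⟩ := mem_iUnion.1 hx
  exact mem_biUnion (fun hsub => hxA (hsub hi)) hi

end AlmostSub

lemma infinite_image_of_tendsto_cofinite {α β : Type*} {s : Set α} {f : α → β} (hs : s.Infinite)
    (hf : Tendsto f cofinite cofinite) : (f '' s).Infinite :=
  frequently_cofinite_iff_infinite.1 <|
    hf.frequently ((frequently_cofinite_iff_infinite.2 hs).mono fun _ => mem_image_of_mem f)

lemma exists_infinite_subset_forall_lt {R : ℕ → ℕ → Prop} (hR : ∀ x, ∀ᶠ y in atTop, R x y)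
    {X : Set ℕ} (hX : X.Infinite) :
    ∃ Y ⊆ X, Y.Infinite ∧ ∀ x ∈ Y, ∀ y ∈ Y, x < y → R x y := by
  have hnext : ∀ s : Finset ℕ, ∃ y ∈ X, ∀ x ∈ s, x < y ∧ R x y := fun s =>
    ((Nat.frequently_atTop_iff_infinite.2 hX).and_eventually <|
      (eventually_all_finset s).2 fun x _ => (eventually_gt_atTop x).and (hR x)).exists
  obtain ⟨u, huX, hu⟩ := exists_seq_of_forall_finset_exists (· ∈ X) (fun x y => x < y ∧ R x y)
    fun s _ => hnext s
  have hmono : StrictMono u := fun m n hmn => (hu m n hmn).1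
  refine ⟨range u, range_subset_iff.2 huX, infinite_range_of_injective hmono.injective, ?_⟩
  rintro _ ⟨m, rfl⟩ _ ⟨n, rfl⟩ hlt
  exact (hu m n (hmono.lt_iff_lt.1 hlt)).2

section Thick

/-- The starting points of the intervals `[m, m + k]` contained in `A`; a set is thick when it has
such a starting point for every `k`. -/
def intervalStarts (k : ℕ) (A : Set ℕ) : Set ℕ := {m | Icc m (m + k) ⊆ A}

variable {A B : Set ℕ}

lemma almostSub.intervalStarts (h : almostSub A B) (k : ℕ) :
    almostSub (intervalStarts k A) (intervalStarts k B) := by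
  rw [almostSub_iff_eventually_atTop] at *
  filter_upwards [eventually_forall_ge_atTop.2 h] with m hm hmA x hx using hm x hx.1 (hmA hx)

lemma Thick.infinite_intervalStarts (hA : Thick A) (k : ℕ) : (intervalStarts k A).Infinite := by
  refine infinite_of_forall_exists_gt fun N => ?_
  obtain ⟨n, hn⟩ := hA (N + 1 + k)
  exact ⟨n + (N + 1), (Icc_subset_Icc (by lia) (by lia)).trans hn, by lia⟩

lemma Thick.infinite (hA : Thick A) : A.Infinite :=
  (hA.infinite_intervalStarts 0).mono fun m (hm : Icc m (m + 0) ⊆ A) =>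
    hm (left_mem_Icc.2 le_rfl)

lemma thick_iUnion_Icc (m : ℕ → ℕ) : Thick (⋃ k, Icc (m k) (m k + k)) := fun k =>
  ⟨m k, subset_iUnion (fun k => Icc (m k) (m k + k)) k⟩

lemma tendsto_natSqrt_cofinite : Tendsto Nat.sqrt cofinite cofinite := by
  rw [Nat.cofinite_eq_atTop]
  exact tendsto_atTop_atTop.2 fun n => ⟨n * n, fun _ => Nat.le_sqrt.2⟩

lemma thick_preimage_natSqrt (hA : A.Infinite) : Thick (Nat.sqrt ⁻¹' A) := by
  intro k
  obtain ⟨n, hnA, hkn⟩ := hA.exists_gt k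
  refine ⟨n * n, fun x hx => ?_⟩
  obtain ⟨a, rfl⟩ := Nat.exists_eq_add_of_le hx.1
  have hak : a ≤ k := by simpa using hx.2
  rwa [mem_preimage, Nat.sqrt_add_eq n (by lia)]

end Thick

lemma exists_infinite_subset_infinite_sdiff {α : Type*} {B : Set α} (hB : B.Infinite) :
    ∃ D ⊆ B, D.Infinite ∧ (B \ D).Infinite := by
  obtain ⟨D, E, rfl, hDE, hcard⟩ := hB.exists_union_disjoint_cardinal_eq_of_infinite
  have hiff : D.Finite ↔ E.Finite := by
    rw [← lt_aleph0_iff_set_finite, hcard, lt_aleph0_iff_set_finite]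
  rw [infinite_union] at hB
  refine ⟨D, subset_union_left, by tauto, ?_⟩
  rw [union_sdiff_cancel_left hDE.le_bot]
  tauto

section Towers

/-- A `P`-tower: a `⊆*`-chain of sets satisfying `P` with no `⊆*`-lower bound satisfying `P`.
By definition `𝔱` and `𝔱_Θ` are the least cardinalities of a tower for `P = Set.Infinite` and
`P = Thick`. Towers are not required to be well-ordered by `⊇*`. -/
def IsTower (P : Set ℕ → Prop) (C : Set (Set ℕ)) : Prop :=
  (∀ A ∈ C, P A) ∧ IsChain almostSub C ∧ ¬∃ B : Set ℕ, P B ∧ ∀ A ∈ C, almostSub B A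

lemma exists_isTower_infinite : ∃ C, IsTower Set.Infinite C := by
  let r (A B : {A : Set ℕ // A.Infinite}) : Prop := almostSub A B
  obtain ⟨hchain, hmax⟩ : IsMaxChain r (maxChain r) := maxChain_spec
  refine ⟨Subtype.val '' maxChain r, forall_mem_image.2 fun A _ => A.2,
    hchain.image_of_map_rel r almostSub Subtype.val fun _ _ => id, ?_⟩
  rintro ⟨B, hB, hlow⟩
  obtain ⟨D, hDB, hD, hBD⟩ := exists_infinite_subset_infinite_sdiff hB
  -- By maximality the half `D` of `B` is a member of the chain, but `B` is not almost below `D`.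
  have hDmem : ⟨D, hD⟩ ∈ maxChain r := by
    have hinsert : IsChain r (insert ⟨D, hD⟩ (maxChain r)) := hchain.insert fun A hA _ =>
      Or.inl ((almostSub_of_subset hDB).trans (hlow A (mem_image_of_mem _ hA)))
    exact hmax hinsert (subset_insert _ _) ▸ mem_insert _ _
  exact hBD (hlow D (mem_image_of_mem _ hDmem))

lemma IsTower.towerNum_le_mk {C : Set (Set ℕ)} (hC : IsTower Set.Infinite C) : towerNum ≤ #C :=
  csInf_le' ⟨C, rfl, hC⟩

lemma IsTower.towerNumTheta_le_mk {C : Set (Set ℕ)} (hC : IsTower Thick C) :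
    towerNumTheta ≤ #C :=
  csInf_le' ⟨C, rfl, hC⟩

lemma IsTower.image_preimage_natSqrt {C : Set (Set ℕ)} (hC : IsTower Set.Infinite C) :
    IsTower Thick ((Nat.sqrt ⁻¹' ·) '' C) := by
  obtain ⟨hinf, hchain, hbound⟩ := hC
  refine ⟨forall_mem_image.2 fun A hA => thick_preimage_natSqrt (hinf A hA),
    hchain.image_of_map_rel _ _ _ fun _ _ h => h.preimage tendsto_natSqrt_cofinite, ?_⟩
  rintro ⟨B, hB, hlow⟩
  exact hbound ⟨Nat.sqrt '' B,
    infinite_image_of_tendsto_cofinite hB.infinite tendsto_natSqrt_cofinite,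
    fun A hA => (hlow _ (mem_image_of_mem _ hA)).image_left⟩

end Towers

section BelowTowerNum

lemma exists_infinite_forall_almostSub {C : Set (Set ℕ)} (hC : #C < towerNum)
    (hinf : ∀ A ∈ C, A.Infinite) (hchain : IsChain almostSub C) :
    ∃ B : Set ℕ, B.Infinite ∧ ∀ A ∈ C, almostSub B A :=
  by_contra fun hbound => hC.not_ge (IsTower.towerNum_le_mk ⟨hinf, hchain, hbound⟩)

variable {ι : Type}

lemma exists_infinite_forall_almostSub_of_forall_lt [LinearOrder ι] (hι : #ι < towerNum)
    {T : ι → Set ℕ} (hinf : ∀ i, (T i).Infinite) (hT : ∀ i j, i < j → almostSub (T j) (T i)) :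
    ∃ B : Set ℕ, B.Infinite ∧ ∀ i, almostSub B (T i) := by
  have hchain : IsChain almostSub (range T) := by
    rintro _ ⟨i, rfl⟩ _ ⟨j, rfl⟩ hne
    exact (ne_of_apply_ne T hne).lt_or_gt.symm.imp (hT j i) (hT i j)
  obtain ⟨B, hB, hlow⟩ := exists_infinite_forall_almostSub
    (mk_range_le.trans_lt hι) (forall_mem_range.2 hinf) hchain
  exact ⟨B, hB, forall_mem_range.1 hlow⟩

/-- This is `𝔱 ≤ 𝔥`, where `𝔥` is the distributivity number. -/
lemma exists_infinite_forall_almostSub_mem_of_dense (hι : #ι < towerNum)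
    {D : ι → Set (Set ℕ)} (hD : ∀ i, ∀ X : Set ℕ, X.Infinite → ∃ Y ⊆ X, Y.Infinite ∧ Y ∈ D i) :
    ∃ X : Set ℕ, X.Infinite ∧ ∀ i, ∃ Y ∈ D i, almostSub X Y := by
  obtain ⟨_, _⟩ := exists_wellFoundedLT ι
  obtain ⟨T, hT, hanti⟩ := exists_family_of_wellFoundedLT
    (fun i Y => Y.Infinite ∧ Y ∈ D i) (fun A B => almostSub B A) fun i T hT hanti => by
      obtain ⟨B, hB, hlow⟩ := exists_infinite_forall_almostSub_of_forall_lt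
        (T := fun j : Iio i => T j) ((mk_subtype_le _).trans_lt hι) (fun j => (hT j j.2).1)
        fun j k hjk => hanti k k.2 j hjk
      obtain ⟨Y, hYB, hY, hYD⟩ := hD i B hB
      exact ⟨Y, ⟨hY, hYD⟩, fun j hj => (almostSub_of_subset hYB).trans (hlow ⟨j, hj⟩)⟩
  obtain ⟨X, hX, hlow⟩ := exists_infinite_forall_almostSub_of_forall_lt hι
    (fun i => (hT i).1) fun i j hij => hanti j i hij
  exact ⟨X, hX, fun i => ⟨T i, (hT i).2, hlow i⟩⟩

/-- This is `𝔱 ≤ 𝔟`, where `𝔟` is the bounding number. -/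
lemma exists_forall_eventuallyLE (hι : #ι < towerNum) (f : ι → ℕ → ℕ) :
    ∃ g : ℕ → ℕ, ∀ i, f i ≤ᶠ[atTop] g := by
  obtain ⟨X, hX, hXD⟩ := exists_infinite_forall_almostSub_mem_of_dense hι
    (D := fun i => {Y | ∀ x ∈ Y, ∀ y ∈ Y, x < y → ∀ n ≤ x, f i n ≤ y}) fun i X hX =>
      exists_infinite_subset_forall_lt
        (fun x => (eventually_all_finite (finite_Iic x)).2 fun n _ => eventually_ge_atTop (f i n))
        hX
  choose next hnextX hnext using hX.exists_gt
  refine ⟨fun n => next (next n), fun i => ?_⟩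
  obtain ⟨Y, hY, hXY⟩ := hXD i
  filter_upwards [eventually_forall_ge_atTop.2 (almostSub_iff_eventually_atTop.1 hXY)] with n hn
  have hn₁ := hnext n
  have hn₂ := hnext (next n)
  exact hY _ (hn _ hn₁.le (hnextX _)) _ (hn _ (hn₁.trans hn₂).le (hnextX _)) hn₂ n hn₁.le

theorem exists_thick_forall_almostSub {C : Set (Set ℕ)} (hC : #C < towerNum)
    (hthick : ∀ A ∈ C, Thick A) (hchain : IsChain almostSub C) :
    ∃ B : Set ℕ, Thick B ∧ ∀ A ∈ C, almostSub B A := by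
  have hstarts (k : ℕ) :
      ∃ P : Set ℕ, P.Infinite ∧ ∀ A ∈ C, almostSub P (intervalStarts k A) := by
    simpa only [forall_mem_image] using exists_infinite_forall_almostSub
      (C := intervalStarts k '' C) (mk_image_le.trans_lt hC)
      (forall_mem_image.2 fun A hA => (hthick A hA).infinite_intervalStarts k)
      (hchain.image_of_map_rel _ _ _ fun _ _ h => h.intervalStarts k)
  choose P hP hPstarts using hstarts
  have hbound (A : C) (k : ℕ) : ∃ N, ∀ m ≥ N, m ∈ P k → Icc m (m + k) ⊆ A :=
    eventually_atTop.1 (almostSub_iff_eventually_atTop.1 (hPstarts k A A.2))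
  choose f hf using hbound
  obtain ⟨g, hg⟩ := exists_forall_eventuallyLE hC f
  choose m hmP hgm using fun k => (hP k).exists_gt (g k)
  refine ⟨_, thick_iUnion_Icc m, fun A hA =>
    almostSub_iUnion_of_eventually_subset (fun _ => finite_Icc _ _) ?_⟩
  rw [Nat.cofinite_eq_atTop]
  filter_upwards [hg ⟨A, hA⟩] with k hk
  exact hf ⟨A, hA⟩ k (m k) (hk.trans (hgm k).le) (hmP k)

end BelowTowerNum

/-- `𝔱_Θ = 𝔱`. -/
theorem stmt4 : towerNumTheta = towerNum := by
  obtain ⟨C₀, hC₀⟩ := exists_isTower_infinite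
  refine le_antisymm (le_csInf ⟨_, C₀, rfl, hC₀⟩ ?_)
    (le_csInf ⟨_, _, rfl, hC₀.image_preimage_natSqrt⟩ ?_)
  · rintro _ ⟨C, rfl, hC : IsTower Set.Infinite C⟩
    exact hC.image_preimage_natSqrt.towerNumTheta_le_mk.trans mk_image_le
  · rintro _ ⟨C, rfl, hthick, hchain, hbound⟩
    exact not_lt.1 fun hlt => hbound (exists_thick_forall_almostSub hlt hthick hchain)

end
end

section
/- Assuming the Continuum Hypothesis (2^{ℵ₀} = ℵ₁), there is an autohomeomorphism τ of ℕ* such that (ℕ*, τ) is chain transitive but (ℕ*, τ) is not isomorphic to (ℕ*, σ). -/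
open Filter Set Topology

noncomputable section

/- The even numbers cut `ℕ*` into two clopen sets exchanged by the shift. An automorphism `φ` of an
atomless Boolean algebra with no nontrivial `a ≤ φ a` and no `a` with `φ a = aᶜ` is provided by the
full shift on `ℤ → Bool`, which is topologically transitive and has a fixed point. Both properties
pass to the ultrapower of the algebra of clopen sets of `ℤ → Bool`. This ultrapower and the algebra
of clopen sets of `ℕ*`, which is `P(ℕ)/fin` (as `Germ cofinite Prop`), are atomless, countably
saturated and of size at most the continuum, hence isomorphic under CH, by a back-and-forth
construction of length `ω₁` (Parovičenko). Stone duality turns the resulting automorphism into `τ`: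
the absence of nontrivial `a ≤ φ a` is chain transitivity, and the absence of `φ a = aᶜ` rules out a
conjugacy with the shift. -/

namespace ParovicenkoShift

open Cardinal

universe u

section Order

variable {P A B : Type*}

theorem nonempty_orderIso_of_biTotal [PartialOrder A] [PartialOrder B] {r : A → B → Prop}
    (hr : Relator.BiTotal r)
    (hle : ∀ {a a' b b'}, r a b → r a' b' → (a ≤ a' ↔ b ≤ b')) : Nonempty (A ≃o B) := by
  choose f hf using hr.1
  choose g hg using hr.2
  exact ⟨{
    toFun := f
    invFun := g
    left_inv := fun a => le_antisymm ((hle (hg _) (hf a)).2 le_rfl) ((hle (hf a) (hg _)).2 le_rfl)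
    right_inv := fun b => le_antisymm ((hle (hf _) (hg b)).1 le_rfl) ((hle (hg b) (hf _)).1 le_rfl)
    map_rel_iff' := (hle (hf _) (hf _)).symm }⟩

theorem exists_wellOrder_countable_Iio {ι : Type*} (hι : #ι ≤ ℵ₁) :
    ∃ (_ : LinearOrder ι) (_ : WellFoundedLT ι), ∀ i : ι, (Iio i).Countable := by
  obtain ⟨_, hwf, hord⟩ := exists_ord_eq_type_lt ι
  refine ⟨_, hwf, fun i => ?_⟩
  have hlt : #(Iio i) < ℵ₁ := (mk_Iio_lt i hord).trans_le hι
  rwa [← succ_aleph0, Order.lt_succ_iff, le_aleph0_iff_set_countable] at hlt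

theorem exists_isChain_meeting_cofinals [Preorder P]
    (hP : ∀ C : Set P, C.Countable → IsChain (· ≤ ·) C → BddAbove C)
    {ι : Type*} (hι : #ι ≤ ℵ₁) (D : ι → Order.Cofinal P) :
    ∃ C : Set P, IsChain (· ≤ ·) C ∧ ∀ i, ∃ x ∈ C, x ∈ D i := by
  obtain ⟨_, _, hcount⟩ := exists_wellOrder_countable_Iio hι
  have : Nonempty P := (hP ∅ countable_empty IsChain.empty).nonempty
  choose! ub hub using hP
  let f : ι → P :=
    wellFounded_lt.fix fun i rec => (D i).above (ub (range fun j : Iio i => rec j j.2))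
  have hf (i : ι) : f i = (D i).above (ub (f '' Iio i)) := by
    rw [image_eq_range]
    exact wellFounded_lt.fix_eq _ i
  have isChain_image {s : Set ι} (hs : ∀ i ∈ s, ∀ j < i, f j ≤ f i) : IsChain (· ≤ ·) (f '' s) := by
    rintro _ ⟨i, hi, rfl⟩ _ ⟨j, hj, rfl⟩ hne
    rcases lt_trichotomy i j with h | rfl | h
    · exact Or.inl (hs j hj i h)
    · exact (hne rfl).elim
    · exact Or.inr (hs i hi j h)
  have hmono (i : ι) : ∀ j < i, f j ≤ f i := by
    induction i using WellFoundedLT.induction with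
    | ind i ih =>
      intro j hj
      rw [hf i]
      exact (hub _ ((hcount i).image f) (isChain_image ih) ⟨j, hj, rfl⟩).trans ((D i).le_above _)
  exact ⟨f '' univ, isChain_image fun i _ => hmono i,
    fun i => ⟨f i, ⟨i, mem_univ i, rfl⟩, hf i ▸ (D i).above_mem _⟩⟩

theorem exists_ne_bot_le_forall_not_le [PartialOrder A] [OrderBot A] [DenselyOrdered A]
    (S : Finset A) (hS : ∀ v ∈ S, v ≠ ⊥) {w : A} (hw : w ≠ ⊥) :
    ∃ t ≠ ⊥, t ≤ w ∧ ∀ v ∈ S, ¬ v ≤ t := by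
  classical
  induction S using Finset.induction_on with
  | empty => exact ⟨w, hw, le_rfl, by simp⟩
  | insert a S _ ih =>
    obtain ⟨ha, hS⟩ := (Finset.forall_mem_insert _ _ _).1 hS
    obtain ⟨t, ht, htw, htS⟩ := ih hS
    by_cases hat : a ≤ t
    · obtain ⟨b, hb, hba⟩ := exists_between (bot_lt_iff_ne_bot.2 ha)
      have hbt : b ≤ t := hba.le.trans hat
      exact ⟨b, hb.ne', hbt.trans htw, (Finset.forall_mem_insert _ _ _).2
        ⟨hba.not_ge, fun v hv hvb => htS v hv (hvb.trans hbt)⟩⟩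
    · exact ⟨t, ht, htw, (Finset.forall_mem_insert _ _ _).2 ⟨hat, htS⟩⟩

variable [BooleanAlgebra A] [DenselyOrdered A]

theorem exists_mem_Icc_not_le {p u v : A} (hpu : p ≤ u) (hv : ¬ v ≤ p) (T : Finset A)
    (hT : ∀ t ∈ T, ¬ u ≤ t) : ∃ y ∈ Icc p u, ¬ v ≤ y ∧ ∀ t ∈ T, ¬ y ≤ t := by
  classical
  obtain ⟨e, he, hev, heT⟩ := exists_ne_bot_le_forall_not_le (T.image (u \ ·))
    (by simpa [Finset.forall_mem_image, sdiff_eq_bot_iff] using hT)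
    (sdiff_eq_bot_iff.not.2 hv)
  refine ⟨u \ e, ⟨?_, sdiff_le⟩, fun hle => he ?_, fun t ht hle => ?_⟩
  · exact le_sdiff.2 ⟨hpu, disjoint_sdiff_self_right.mono_right hev⟩
  · exact disjoint_sdiff_self_right.eq_bot_of_le ((hev.trans sdiff_le).trans hle)
  · exact heT _ (Finset.mem_image_of_mem _ ht) (sdiff_le_comm.1 hle)

theorem exists_mem_Icc_forall_not_le {p u : A} (hpu : p ≤ u) (S T : Finset A)
    (hS : ∀ v ∈ S, ¬ v ≤ p) (hT : ∀ t ∈ T, ¬ u ≤ t) :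
    ∃ y ∈ Icc p u, (∀ v ∈ S, ¬ v ≤ y) ∧ ∀ t ∈ T, ¬ y ≤ t := by
  classical
  induction S using Finset.induction_on with
  | empty => exact ⟨u, ⟨hpu, le_rfl⟩, by simp, hT⟩
  | insert a S _ ih =>
    obtain ⟨ha, hS⟩ := (Finset.forall_mem_insert _ _ _).1 hS
    obtain ⟨y, hy, hyS, hyT⟩ := ih hS
    obtain ⟨z, hz, haz, hzT⟩ := exists_mem_Icc_not_le hy.1 ha T hyT
    exact ⟨z, ⟨hz.1, hz.2.trans hy.2⟩, (Finset.forall_mem_insert _ _ _).2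
      ⟨haz, fun v hv hvz => hyS v hv (hvz.trans hz.2)⟩, hzT⟩

end Order

section BackAndForth

variable {A B : Type*} [BooleanAlgebra A] [BooleanAlgebra B]

theorem inf_sup_inf_compl_inf (r s r' s' w : A) :
    (r ⊓ w ⊔ s ⊓ wᶜ) ⊓ (r' ⊓ w ⊔ s' ⊓ wᶜ) = r ⊓ r' ⊓ w ⊔ s ⊓ s' ⊓ wᶜ := by
  simp only [inf_sup_left, inf_sup_right, inf_inf_inf_comm _ w, inf_inf_inf_comm _ wᶜ,
    inf_compl_self, compl_inf_self, inf_bot_eq, sup_bot_eq, bot_sup_eq, inf_idem]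

theorem compl_inf_sup_inf_compl (r s w : A) : (r ⊓ w ⊔ s ⊓ wᶜ)ᶜ = rᶜ ⊓ w ⊔ sᶜ ⊓ wᶜ := by
  refine (IsCompl.of_eq ?_ ?_).compl_eq
  · simp only [inf_sup_inf_compl_inf, inf_compl_self, bot_inf_eq, sup_bot_eq]
  · rw [sup_sup_sup_comm, ← inf_sup_right, ← inf_sup_right, sup_compl_eq_top, sup_compl_eq_top,
      top_inf_eq, top_inf_eq, sup_compl_eq_top]

theorem mem_sSup_of_directedOn {S : Set (BooleanSubalgebra A)} (hne : S.Nonempty)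
    (hS : DirectedOn (· ≤ ·) S) {x : A} : x ∈ sSup S ↔ ∃ L ∈ S, x ∈ L := by
  refine ⟨fun hx => ?_, fun ⟨L, hL, hx⟩ => le_sSup hL hx⟩
  have common {x y : A} (hx : ∃ L ∈ S, x ∈ L) (hy : ∃ L ∈ S, y ∈ L) :
      ∃ L ∈ S, x ∈ L ∧ y ∈ L := by
    obtain ⟨L, hL, hxL⟩ := hx
    obtain ⟨M, hM, hyM⟩ := hy
    obtain ⟨N, hN, hLN, hMN⟩ := hS L hL M hM
    exact ⟨N, hN, hLN hxL, hMN hyM⟩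
  let U : BooleanSubalgebra A :=
    { carrier := {x | ∃ L ∈ S, x ∈ L}
      supClosed' := fun x hx y hy =>
        let ⟨L, hL, hxL, hyL⟩ := common hx hy
        ⟨L, hL, L.sup_mem hxL hyL⟩
      infClosed' := fun x hx y hy =>
        let ⟨L, hL, hxL, hyL⟩ := common hx hy
        ⟨L, hL, L.inf_mem hxL hyL⟩
      compl_mem' := fun ⟨L, hL, hxL⟩ => ⟨L, hL, L.compl_mem hxL⟩
      bot_mem' := hne.imp fun L hL => ⟨hL, L.bot_mem⟩ }
  exact (sSup_le fun L hL x hx => ⟨L, hL, hx⟩ : sSup S ≤ U) hx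

/-- The Boolean subalgebra generated by `L` and `w`, given by the normal form of its elements. -/
def adjoin (L : BooleanSubalgebra A) (w : A) : BooleanSubalgebra A where
  carrier := image2 (fun r s => r ⊓ w ⊔ s ⊓ wᶜ) L L
  supClosed' := by
    rintro _ ⟨r, hr, s, hs, rfl⟩ _ ⟨r', hr', s', hs', rfl⟩
    refine ⟨r ⊔ r', L.sup_mem hr hr', s ⊔ s', L.sup_mem hs hs', ?_⟩
    simp only [inf_sup_right, sup_sup_sup_comm]
  infClosed' := by
    rintro _ ⟨r, hr, s, hs, rfl⟩ _ ⟨r', hr', s', hs', rfl⟩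
    exact ⟨r ⊓ r', L.inf_mem hr hr', s ⊓ s', L.inf_mem hs hs',
      (inf_sup_inf_compl_inf r s r' s' w).symm⟩
  compl_mem' := by
    rintro _ ⟨r, hr, s, hs, rfl⟩
    exact ⟨rᶜ, L.compl_mem hr, sᶜ, L.compl_mem hs, (compl_inf_sup_inf_compl r s w).symm⟩
  bot_mem' := ⟨⊥, L.bot_mem, ⊥, L.bot_mem, by simp⟩

theorem countable_adjoin {L : BooleanSubalgebra A} (hL : (L : Set A).Countable) (w : A) :
    (adjoin L w : Set A).Countable :=
  hL.image2 hL _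

theorem le_adjoin (L : BooleanSubalgebra A) (w : A) : L ≤ adjoin L w := fun r hr =>
  ⟨r, hr, r, hr, by simp only [← inf_sup_left, sup_compl_eq_top, inf_top_eq]⟩

theorem self_mem_adjoin (L : BooleanSubalgebra A) (w : A) : w ∈ adjoin L w :=
  ⟨⊤, L.top_mem, ⊥, L.bot_mem, by simp⟩

/-- A partial isomorphism between `A` and `B`, encoded by its graph: a subalgebra of `A × B`
which is the graph of an isomorphism between a subalgebra of `A` and a subalgebra of `B`. -/
def IsPartialIso (L : BooleanSubalgebra (A × B)) : Prop :=
  ∀ z ∈ L, z.1 = ⊥ ↔ z.2 = ⊥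

/-- The graph of the inverse of a partial isomorphism. -/
def swap (L : BooleanSubalgebra (A × B)) : BooleanSubalgebra (B × A) :=
  L.comap (OrderIso.prodComm : B × A ≃o A × B)

theorem countable_swap {L : BooleanSubalgebra (A × B)} (hL : (L : Set (A × B)).Countable) :
    (swap L : Set (B × A)).Countable :=
  hL.preimage Prod.swap_injective

namespace IsPartialIso

variable {L : BooleanSubalgebra (A × B)}

protected theorem swap (hL : IsPartialIso L) : IsPartialIso (swap L) := fun z hz =>
  (hL z.swap hz).symm

protected theorem bot [Nontrivial A] [Nontrivial B] :
    IsPartialIso (⊥ : BooleanSubalgebra (A × B)) := by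
  rintro _ (rfl | rfl) <;> simp

protected theorem sSup {S : Set (BooleanSubalgebra (A × B))} (hS : ∀ L ∈ S, IsPartialIso L)
    (hne : S.Nonempty) (hdir : DirectedOn (· ≤ ·) S) : IsPartialIso (sSup S) := fun z hz =>
  let ⟨L, hL, hzL⟩ := (mem_sSup_of_directedOn hne hdir).1 hz
  hS L hL z hzL

theorem le_iff (hL : IsPartialIso L) {z w : A × B} (hz : z ∈ L) (hw : w ∈ L) :
    z.1 ≤ w.1 ↔ z.2 ≤ w.2 := by
  rw [← sdiff_eq_bot_iff, ← sdiff_eq_bot_iff]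
  exact hL _ (L.sdiff_mem hz hw)

end IsPartialIso

theorem isPartialIso_adjoin {L : BooleanSubalgebra (A × B)} {x : A} {y : B}
    (hxy : ∀ c ∈ L, (c.1 ≤ x ↔ c.2 ≤ y) ∧ (x ≤ c.1 ↔ y ≤ c.2)) :
    IsPartialIso (adjoin L (x, y)) := by
  rintro _ ⟨r, hr, s, hs, rfl⟩
  change r.1 ⊓ x ⊔ s.1 ⊓ xᶜ = ⊥ ↔ r.2 ⊓ y ⊔ s.2 ⊓ yᶜ = ⊥
  simp only [sup_eq_bot_iff, ← disjoint_iff, ← le_compl_iff_disjoint_left, compl_le_compl_iff_le]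
  exact and_congr (hxy rᶜ (L.compl_mem hr)).2 (hxy s hs).1

/-- Countable saturation (for quantifier-free types in one variable): a countable system of
conditions `a i ≤ y`, `y ≤ b i` and of negations of such conditions is satisfiable as soon as each
of its finite subsystems is. -/
def CountablySaturated (A : Type u) [LE A] : Prop :=
  ∀ {ι : Type u} [Countable ι] (a b : ι → A) (p q : ι → Prop),
    (∀ s : Finset ι, ∃ y, ∀ i ∈ s, (a i ≤ y ↔ p i) ∧ (y ≤ b i ↔ q i)) →
      ∃ y, ∀ i, (a i ≤ y ↔ p i) ∧ (y ≤ b i ↔ q i)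

variable {L : BooleanSubalgebra (A × B)}

theorem IsPartialIso.exists_forall_mem_finset [DenselyOrdered B] (hL : IsPartialIso L) (x : A)
    (F : Finset L) :
    ∃ y, ∀ c ∈ F, (c.1.1 ≤ x ↔ c.1.2 ≤ y) ∧ (x ≤ c.1.1 ↔ y ≤ c.1.2) := by
  classical
  let p : L := (F.filter (·.1.1 ≤ x)).sup id
  let u : L := (F.filter (x ≤ ·.1.1)).inf id
  have hp : p.1.1 ≤ x := by
    refine Finset.sup_induction (p := fun c : L => c.1.1 ≤ x) bot_le (fun _ ha _ hb => sup_le ha hb)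
      fun c hc => (Finset.mem_filter.1 hc).2
  have hu : x ≤ u.1.1 := by
    refine Finset.inf_induction (p := fun c : L => x ≤ c.1.1) le_top (fun _ ha _ hb => le_inf ha hb)
      fun c hc => (Finset.mem_filter.1 hc).2
  obtain ⟨y, ⟨hpy, hyu⟩, hS, hT⟩ := exists_mem_Icc_forall_not_le
    ((hL.le_iff p.2 u.2).1 (hp.trans hu))
    ((F.filter (¬ ·.1.1 ≤ x)).image (·.1.2)) ((F.filter (¬ x ≤ ·.1.1)).image (·.1.2))
    (Finset.forall_mem_image.2 fun c hc hcp =>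
      (Finset.mem_filter.1 hc).2 (((hL.le_iff c.2 p.2).2 hcp).trans hp))
    (Finset.forall_mem_image.2 fun c hc huc =>
      (Finset.mem_filter.1 hc).2 (hu.trans ((hL.le_iff u.2 c.2).2 huc)))
  refine ⟨y, fun c hc => ⟨⟨fun hcx => ?_, not_imp_not.1 fun hcx => ?_⟩,
    ⟨fun hxc => ?_, not_imp_not.1 fun hxc => ?_⟩⟩⟩
  · have hcp : c ≤ p := Finset.le_sup (f := id) (Finset.mem_filter.2 ⟨hc, hcx⟩)
    exact hcp.2.trans hpy
  · exact hS _ (Finset.mem_image_of_mem _ (Finset.mem_filter.2 ⟨hc, hcx⟩))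
  · have huc : u ≤ c := Finset.inf_le (f := id) (Finset.mem_filter.2 ⟨hc, hxc⟩)
    exact hyu.trans huc.2
  · exact hT _ (Finset.mem_image_of_mem _ (Finset.mem_filter.2 ⟨hc, hxc⟩))

end BackAndForth

section Saturated

variable {A B : Type u} [BooleanAlgebra A] [BooleanAlgebra B]

theorem IsPartialIso.exists_extension [DenselyOrdered B] (hB : CountablySaturated B)
    {L : BooleanSubalgebra (A × B)} (hL : IsPartialIso L) (hc : (L : Set (A × B)).Countable)
    (x : A) :
    ∃ M, IsPartialIso M ∧ (M : Set (A × B)).Countable ∧ L ≤ M ∧ ∃ y, (x, y) ∈ M := by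
  have : Countable L := hc.to_subtype
  obtain ⟨y, hy⟩ := hB (fun c : L => c.1.2) (fun c => c.1.2) (fun c => c.1.1 ≤ x)
    (fun c => x ≤ c.1.1) fun F => (hL.exists_forall_mem_finset x F).imp
      fun y hy c hcF => ⟨(hy c hcF).1.symm, (hy c hcF).2.symm⟩
  exact ⟨adjoin L (x, y),
    isPartialIso_adjoin fun c hcL => ⟨(hy ⟨c, hcL⟩).1.symm, (hy ⟨c, hcL⟩).2.symm⟩,
    countable_adjoin hc _, le_adjoin L _, y, self_mem_adjoin L _⟩

variable (A B) in
/-- The countable partial isomorphisms between `A` and `B`: the conditions of the back-and-forth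
construction. -/
abbrev CountablePartialIso : Type u :=
  {L : BooleanSubalgebra (A × B) // IsPartialIso L ∧ (L : Set (A × B)).Countable}

namespace CountablePartialIso

theorem bddAbove_of_isChain [Nontrivial A] [Nontrivial B] {C : Set (CountablePartialIso A B)}
    (hC : C.Countable) (hchain : IsChain (· ≤ ·) C) : BddAbove C := by
  rcases C.eq_empty_or_nonempty with rfl | hne
  · exact ⟨⟨⊥, .bot, by simp⟩, by simp⟩
  have hdir : DirectedOn (· ≤ ·) (Subtype.val '' C) :=
    (Subtype.mono_coe _).isChain_image hchain |>.directedOn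
  refine ⟨⟨sSup (Subtype.val '' C), .sSup ?_ (hne.image _) hdir, ?_⟩, fun L hL =>
    (le_sSup (mem_image_of_mem _ hL) : L.1 ≤ _)⟩
  · rintro _ ⟨L, -, rfl⟩
    exact L.2.1
  · refine (hC.biUnion fun L _ => L.2.2).mono fun z hz => ?_
    obtain ⟨_, ⟨L, hL, rfl⟩, hzL⟩ := (mem_sSup_of_directedOn (hne.image _) hdir).1 hz
    exact mem_biUnion hL hzL

/-- The countable partial isomorphisms with `x` in their domain. -/
def inDomain [DenselyOrdered B] (hB : CountablySaturated B) (x : A) :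
    Order.Cofinal (CountablePartialIso A B) where
  carrier := {L | ∃ y, (x, y) ∈ L.1}
  isCofinal := fun L =>
    let ⟨M, hM, hcM, hLM, hxM⟩ := L.2.1.exists_extension hB L.2.2 x
    ⟨⟨M, hM, hcM⟩, hxM, hLM⟩

/-- The countable partial isomorphisms with `y` in their range. -/
def inRange [DenselyOrdered A] (hA : CountablySaturated A) (y : B) :
    Order.Cofinal (CountablePartialIso A B) where
  carrier := {L | ∃ x, (x, y) ∈ L.1}
  isCofinal := fun L =>
    let ⟨M, hM, hcM, hLM, hyM⟩ := L.2.1.swap.exists_extension hA (countable_swap L.2.2) y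
    ⟨⟨swap M, hM.swap, countable_swap hcM⟩, hyM, fun z hz =>
      (hLM (show z.swap ∈ swap L.1 from hz) : z.swap ∈ M)⟩

end CountablePartialIso

theorem nonempty_orderIso_of_countablySaturated [Nontrivial A] [Nontrivial B] [DenselyOrdered A]
    [DenselyOrdered B] (hA : CountablySaturated A) (hB : CountablySaturated B)
    (hcardA : #A ≤ ℵ₁) (hcardB : #B ≤ ℵ₁) : Nonempty (A ≃o B) := by
  have hcard : #(A ⊕ B) ≤ ℵ₁ := by
    rw [mk_sum, lift_id, lift_id]
    exact add_le_of_le (aleph0_le_aleph 1) hcardA hcardB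
  obtain ⟨C, hC, hmeet⟩ := exists_isChain_meeting_cofinals
    (fun _ => CountablePartialIso.bddAbove_of_isChain) hcard
    (Sum.elim (CountablePartialIso.inDomain hB) (CountablePartialIso.inRange hA))
  refine nonempty_orderIso_of_biTotal (r := fun x y => ∃ L ∈ C, (x, y) ∈ L.1) ⟨fun x => ?_,
    fun y => ?_⟩ ?_
  · obtain ⟨L, hL, y, hxy⟩ : ∃ L ∈ C, ∃ y, (x, y) ∈ L.1 := hmeet (.inl x)
    exact ⟨y, L, hL, hxy⟩
  · obtain ⟨L, hL, x, hxy⟩ : ∃ L ∈ C, ∃ x, (x, y) ∈ L.1 := hmeet (.inr y)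
    exact ⟨x, L, hL, hxy⟩
  · rintro a a' b b' ⟨L, hL, hab⟩ ⟨M, hM, hab'⟩
    obtain ⟨N, -, hLN, hMN⟩ := hC.directedOn L hL M hM
    exact N.2.1.le_iff (hLN hab) (hMN hab')

end Saturated

section Diagonal

variable {ι κ : Type*} [Countable ι] [Countable κ]

theorem exists_diagonal_eventually {l : Filter ℕ} (hl : l ≤ atTop) {P : ι → ℕ → ℕ → Prop}
    (hP : ∀ i, ∀ᶠ n in atTop, ∀ᶠ k in l, P i n k) : ∃ m : ℕ → ℕ, ∀ i, ∀ᶠ k in l, P i (m k) k := by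
  classical
  obtain ⟨s, -, hs_top⟩ := exists_seq_monotone_tendsto_atTop_atTop (Finset ι)
  have hev (n : ℕ) : ∀ᶠ k in l, ∀ i ∈ s n, (∀ᶠ k in l, P i n k) → P i n k := by
    refine (Filter.eventually_all_finset _).2 fun i _ => ?_
    by_cases h : ∀ᶠ k in l, P i n k
    · exact h.mono fun k hk _ => hk
    · exact .of_forall fun k hk => (h hk).elim
  let m (k : ℕ) : ℕ := Nat.findGreatest (fun n => ∀ i ∈ s n, (∀ᶠ k in l, P i n k) → P i n k) k
  refine ⟨m, fun i => ?_⟩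
  obtain ⟨N, hN⟩ := eventually_atTop.1
    ((hP i).and (hs_top.eventually (eventually_ge_atTop {i})))
  filter_upwards [hev N, hl (eventually_ge_atTop N)] with k hk hNk
  have hm : N ≤ m k := Nat.le_findGreatest hNk hk
  exact Nat.findGreatest_spec (P := fun n => ∀ i ∈ s n, (∀ᶠ k in l, P i n k) → P i n k) hNk hk i
    (Finset.singleton_subset_iff.1 (hN _ hm).2) (hN _ hm).1

theorem exists_seq_frequently_eq [Nonempty κ] : ∃ e : ℕ → κ, ∀ j, ∃ᶠ t in atTop, e t = j := by
  obtain ⟨e, he⟩ := exists_surjective_nat κ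
  refine ⟨fun t => e t.unpair.1, fun j => frequently_atTop.2 fun N => ?_⟩
  obtain ⟨a, rfl⟩ := he j
  exact ⟨Nat.pair a N, Nat.right_le_pair a N, by simp⟩

theorem exists_diagonal_eventually_frequently {P : ι → ℕ → ℕ → Prop} {Q : κ → ℕ → ℕ → Prop}
    (hP : ∀ i, ∀ᶠ n in atTop, ∀ᶠ k in atTop, P i n k)
    (hQ : ∀ j, ∀ᶠ n in atTop, ∃ᶠ k in atTop, Q j n k) :
    ∃ m : ℕ → ℕ, (∀ i, ∀ᶠ k in atTop, P i (m k) k) ∧ ∀ j, ∃ᶠ k in atTop, Q j (m k) k := by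
  obtain ⟨m₀, hm₀⟩ := exists_diagonal_eventually le_rfl hP
  rcases isEmpty_or_nonempty κ
  · exact ⟨m₀, hm₀, isEmptyElim⟩
  obtain ⟨e, he⟩ := exists_seq_frequently_eq (κ := κ)
  obtain ⟨s, -, hs⟩ := exists_seq_monotone_tendsto_atTop_atTop (Finset ι)
  have hfreq (t : ℕ) : ∃ᶠ k in atTop, ∃ n, Q (e t) n k ∧ ∀ i ∈ s t, P i n k := by
    obtain ⟨n, hQn, hPn⟩ :=
      ((hQ (e t)).and ((Filter.eventually_all_finset (s t)).2 fun i _ => hP i)).exists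
    exact (hQn.and_eventually ((Filter.eventually_all_finset (s t)).2 hPn)).mono fun k hk => ⟨n, hk⟩
  obtain ⟨φ, hφ, hφs⟩ := extraction_forall_of_frequently hfreq
  choose n hQn hPn using hφs
  have hextend (t : ℕ) : Function.extend φ n m₀ (φ t) = n t := hφ.injective.extend_apply n m₀ t
  refine ⟨Function.extend φ n m₀, fun i => ?_, fun j => ?_⟩
  · obtain ⟨T, hT⟩ := eventually_atTop.1 (hs.eventually (eventually_ge_atTop {i}))
    filter_upwards [hm₀ i, eventually_ge_atTop (φ T)] with k hk hTk
    by_cases hkφ : ∃ t, φ t = k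
    · obtain ⟨t, rfl⟩ := hkφ
      rw [hextend]
      exact hPn t i (Finset.singleton_subset_iff.1 (hT t (hφ.le_iff_le.1 hTk)))
    · rwa [Function.extend_apply' _ _ _ hkφ]
  · refine hφ.tendsto_atTop.frequently ((he j).mono ?_)
    rintro t rfl
    rw [hextend]
    exact hQn t

/-- Diagonalization property of a filter `l` on `ℕ`: from countably many statements about the
`l`-limit behaviour of a sequence of sequences, a single diagonal sequence with the same limit
behaviour can be extracted. It is what makes the reduced powers `Germ l V` saturated. -/
def HasDiagonals (l : Filter ℕ) : Prop :=
  ∀ {ι : Type u} [Countable ι] (P : ι → ℕ → ℕ → Prop) (W : ι → Prop),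
    (∀ i, ∀ᶠ n in atTop, (∀ᶠ k in l, P i n k) ↔ W i) →
      ∃ m : ℕ → ℕ, ∀ i, (∀ᶠ k in l, P i (m k) k) ↔ W i

theorem hasDiagonals_atTop : HasDiagonals.{u} atTop := by
  intro ι _ P W hW
  obtain ⟨m, hm, hm'⟩ := exists_diagonal_eventually_frequently
    (P := fun i : {i // W i} => P i) (Q := fun i : {i // ¬ W i} => fun n k => ¬ P i n k)
    (fun i => (hW i).mono fun n hn => hn.2 i.2)
    (fun i => (hW i).mono fun n hn => not_eventually.1 (mt hn.1 i.2))
  exact ⟨m, fun i => ⟨not_imp_not.1 fun hi => not_eventually.2 (hm' ⟨i, hi⟩), fun hi => hm ⟨i, hi⟩⟩⟩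

theorem hasDiagonals_ultrafilter (U : Ultrafilter ℕ) (hU : (U : Filter ℕ) ≤ atTop) :
    HasDiagonals.{u} (U : Filter ℕ) := by
  intro ι _ P W hW
  have hconst (i : ι) (p : ℕ → Prop) :
      (∀ᶠ k in (U : Filter ℕ), (p k ↔ W i)) ↔ ((∀ᶠ k in (U : Filter ℕ), p k) ↔ W i) := by
    by_cases hi : W i <;> simp only [hi, iff_true, iff_false, Ultrafilter.eventually_not]
  simp only [← hconst] at hW ⊢
  exact exists_diagonal_eventually hU hW

end Diagonal

section Germ

variable {α : Type*} {V W : Type*}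

instance instBooleanAlgebraGerm {l : Filter α} [BooleanAlgebra V] : BooleanAlgebra (Germ l V) where
  __ := (inferInstance : DistribLattice (Germ l V))
  __ := (inferInstance : BoundedOrder (Germ l V))
  compl := Germ.map compl
  inf_compl_le_bot a := a.inductionOn fun f => Germ.coe_le.2 (.of_forall fun k => by simp)
  top_le_sup_compl a := a.inductionOn fun f => Germ.coe_le.2 (.of_forall fun k => by simp)

instance instDenselyOrderedGermCofinite [Preorder V] :
    DenselyOrdered (Germ (cofinite : Filter α) V) where
  dense a b := Germ.inductionOn₂ a b fun f g hfg => by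
    classical
    obtain ⟨hle, hnle⟩ := lt_iff_le_not_ge.1 hfg
    have hinf : {k | ¬ g k ≤ f k}.Infinite :=
      frequently_cofinite_iff_infinite.1 (not_eventually.1 hnle)
    obtain ⟨s, t, hst, hdisj, hcard⟩ := hinf.exists_union_disjoint_cardinal_eq_of_infinite
    have hfin : s.Finite ↔ t.Finite := by
      rw [← lt_aleph0_iff_set_finite, hcard, lt_aleph0_iff_set_finite]
    have hs : s.Infinite := fun hs => hinf (hst ▸ hs.union (hfin.1 hs))
    have ht : t.Infinite := mt hfin.2 hs
    refine ⟨(s.piecewise g f : α → V), lt_iff_le_not_ge.2 ⟨?_, ?_⟩, lt_iff_le_not_ge.2 ⟨?_, ?_⟩⟩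
    · filter_upwards [Germ.coe_le.1 hle] with k hk
      by_cases hks : k ∈ s <;> simp [hks, hk]
    · refine not_eventually.2 (hs.frequently_cofinite.mono fun k hk => ?_)
      simpa [hk] using hst.subset (.inl hk)
    · filter_upwards [Germ.coe_le.1 hle] with k hk
      by_cases hks : k ∈ s <;> simp [hks, hk]
    · refine not_eventually.2 (ht.frequently_cofinite.mono fun k hk => ?_)
      simpa [hdisj.notMem_of_mem_right hk] using hst.subset (.inr hk)

instance instDenselyOrderedGermUltrafilter {U : Ultrafilter α} [Preorder V] [DenselyOrdered V] :
    DenselyOrdered (Germ (U : Filter α) V) where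
  dense a b := Germ.inductionOn₂ a b fun f g hfg => by
    have hbetween (k : α) : ∃ v, f k < g k → f k < v ∧ v < g k := by
      by_cases hk : f k < g k
      · exact (exists_between hk).imp fun v hv _ => hv
      · exact ⟨f k, fun h => (hk h).elim⟩
    choose h hh using hbetween
    have hlt := Germ.coe_lt.1 hfg
    exact ⟨h, Germ.coe_lt.2 (hlt.mono fun k hk => (hh k hk).1),
      Germ.coe_lt.2 (hlt.mono fun k hk => (hh k hk).2)⟩

theorem HasDiagonals.countablySaturated_germ {V : Type u} [LE V] {l : Filter ℕ}
    (hl : HasDiagonals.{u} l) : CountablySaturated (Germ l V) := by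
  intro ι _ a b p q hfin
  obtain ⟨s, -, hs⟩ := exists_seq_monotone_tendsto_atTop_atTop (Finset ι)
  have hmem (i : ι) : ∀ᶠ n in atTop, i ∈ s n :=
    (hs.eventually (eventually_ge_atTop {i})).mono fun n hn => Finset.singleton_subset_iff.1 hn
  have hrep (c : Germ l V) : ∃ f : ℕ → V, (f : Germ l V) = c := c.inductionOn fun f => ⟨f, rfl⟩
  choose f hf using fun i => hrep (a i)
  choose g hg using fun i => hrep (b i)
  choose y hy using fun n => hfin (s n)
  choose Y hY using fun n => hrep (y n)
  obtain ⟨m, hm⟩ := hl (ι := ι ⊕ ι)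
    (Sum.elim (fun i n k => f i k ≤ Y n k) fun i n k => Y n k ≤ g i k) (Sum.elim p q) <| by
      simp only [← hf, ← hg, ← hY] at hy
      exact Sum.forall.2 ⟨fun i => (hmem i).mono fun n hn => (hy n i hn).1,
        fun i => (hmem i).mono fun n hn => (hy n i hn).2⟩
  refine ⟨((fun k => Y (m k) k : ℕ → V) : Germ l V), fun i => ?_⟩
  rw [← hf, ← hg]
  exact ⟨hm (.inl i), hm (.inr i)⟩

theorem mk_germ_le_continuum {l : Filter ℕ} (hV : #V ≤ 𝔠) : #(Germ l V) ≤ 𝔠 := by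
  refine mk_quotient_le.trans ?_
  simpa using power_le_power_right (c := ℵ₀) hV

/-- The order isomorphism of germs induced by an order isomorphism of the values. -/
def germCongr (l : Filter α) [Preorder V] [Preorder W] (e : V ≃o W) : Germ l V ≃o Germ l W where
  toFun := Germ.map e
  invFun := Germ.map e.symm
  left_inv a := a.inductionOn fun f => by simp [Function.comp_def]
  right_inv a := a.inductionOn fun f => by simp [Function.comp_def]
  map_rel_iff' {a b} := Germ.inductionOn₂ a b fun f g => by
    simp [Germ.coe_le, EventuallyLE]

section Ultrapower

variable {U : Ultrafilter α} [BooleanAlgebra V] {φ : V ≃o V}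

theorem eq_bot_or_eq_top_of_le_germCongr (hφ : ∀ v, v ≤ φ v → v = ⊥ ∨ v = ⊤)
    {a : Germ (U : Filter α) V} (ha : a ≤ germCongr (U : Filter α) φ a) : a = ⊥ ∨ a = ⊤ := by
  induction a using Germ.inductionOn with | _ f => ?_
  exact (Ultrafilter.eventually_or.1 ((Germ.coe_le.1 ha).mono fun k hk => hφ _ hk)).imp
    Germ.coe_eq.2 Germ.coe_eq.2

theorem germCongr_ne_compl {l : Filter α} [l.NeBot] (hφ : ∀ v, φ v ≠ vᶜ) (a : Germ l V) :
    germCongr l φ a ≠ aᶜ := by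
  induction a using Germ.inductionOn with | _ f => ?_
  intro h
  obtain ⟨k, hk⟩ := (Germ.coe_eq.1 h).exists
  exact hφ _ hk

end Ultrapower

end Germ

section ChainTransitivity

open TopologicalSpace

variable {X : Type*}

theorem exists_seq_of_reflTransGen {r : X → X → Prop} {x y : X} (h : Relation.ReflTransGen r x y) :
    ∃ (n : ℕ) (c : ℕ → X), c 0 = x ∧ c n = y ∧ ∀ i < n, r (c i) (c (i + 1)) := by
  induction h using Relation.ReflTransGen.head_induction_on with
  | refl => exact ⟨0, fun _ => y, rfl, rfl, by simp⟩
  | @head x z hxz _ ih =>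
    obtain ⟨n, c, hc0, hcn, hc⟩ := ih
    refine ⟨n + 1, fun i => i.casesOn x c, rfl, hcn, fun i hi => ?_⟩
    cases i with
    | zero => exact (congrArg (r x) hc0).mpr hxz
    | succ i => exact hc i (Nat.lt_of_succ_lt_succ hi)

variable {f : X → X} [TopologicalSpace X]

theorem reflTransGen_of_clopen_cover
    (hf : ∀ C : Clopens X, MapsTo f C C → C = ⊥ ∨ C = ⊤) {ι : Type*} [Finite ι] (V : ι → Clopens X)
    (hV : ∀ x, ∃ i, x ∈ V i) (x y : X) :
    Relation.ReflTransGen (fun z w => ∃ i, f z ∈ V i ∧ w ∈ V i) x y := by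
  let r (z w : X) : Prop := ∃ i, f z ∈ V i ∧ w ∈ V i
  have hr (z : X) : r z (f z) := (hV (f z)).imp fun i hi => ⟨hi, hi⟩
  have hC : IsClopen {w | Relation.TransGen r x w} := by
    have hunion : {w | Relation.TransGen r x w} =
        ⋃ i ∈ {i | ∃ z, Relation.ReflTransGen r x z ∧ f z ∈ V i}, (V i : Set X) := by
      ext w
      simp only [mem_ofPred_eq, mem_iUnion, Relation.TransGen.tail'_iff, exists_prop,
        SetLike.mem_coe]
      exact ⟨fun ⟨z, hxz, i, hz, hw⟩ => ⟨i, ⟨z, hxz, hz⟩, hw⟩,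
        fun ⟨i, ⟨z, hxz, hz⟩, hw⟩ => ⟨z, hxz, i, hz, hw⟩⟩
    rw [hunion]
    exact (toFinite _).isClopen_biUnion fun i _ => (V i).isClopen
  rcases hf ⟨_, hC⟩ fun w hw => Relation.TransGen.tail hw (hr w) with h | h
  · have hx : f x ∈ (⊥ : Clopens X) := h ▸ Relation.TransGen.single (hr x)
    exact hx.elim
  · have hy : y ∈ (⟨_, hC⟩ : Clopens X) := h ▸ mem_univ y
    exact Relation.TransGen.to_reflTransGen hy

theorem chainTransitive_of_clopens [CompactSpace X] [T2Space X] [TotallyDisconnectedSpace X]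
    (hf : ∀ C : Clopens X, MapsTo f C C → C = ⊥ ∨ C = ⊤) : ChainTransitive f := by
  intro 𝒰 hopen hcover x y
  let U (S : 𝒰) : Opens X := ⟨S, hopen S S.2⟩
  have hU : IsOpenCover U := by
    rw [IsOpenCover, ← SetLike.coe_set_eq, Opens.coe_iSup, Opens.coe_top, ← hcover,
      sUnion_eq_iUnion]
    rfl
  obtain ⟨n, V, hVU, hV⟩ := hU.exists_finite_clopen_cover
  obtain ⟨m, c, hc0, hcm, hc⟩ := exists_seq_of_reflTransGen
    (reflTransGen_of_clopen_cover hf V (fun z => mem_iUnion.1 (hV (mem_univ z))) x y)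
  refine ⟨m, c, hc0, hcm, fun i hi => ?_⟩
  obtain ⟨j, hfj, hcj⟩ := hc i hi
  obtain ⟨S, hVS⟩ := hVU j
  exact ⟨S, S.2, hVS hfj, hVS hcj⟩

end ChainTransitivity

section Clopens

open TopologicalSpace

variable {X Y : Type*} [TopologicalSpace X] [TopologicalSpace Y]

/-- The isomorphism of clopen algebras dual to a homeomorphism, given by preimages. -/
def clopensCongr (h : X ≃ₜ Y) : Clopens Y ≃o Clopens X where
  toFun C := ⟨h ⁻¹' C, C.isClopen.preimage h.continuous⟩
  invFun C := ⟨h.symm ⁻¹' C, C.isClopen.preimage h.symm.continuous⟩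
  left_inv C := by ext; simp
  right_inv C := by ext; simp
  map_rel_iff' := h.surjective.preimage_subset_preimage_iff

theorem mem_clopensCongr {h : X ≃ₜ Y} {C : Clopens Y} {x : X} : x ∈ clopensCongr h C ↔ h x ∈ C :=
  Iff.rfl

theorem eq_bot_or_eq_top_of_le_clopensCongr {h : X ≃ₜ X}
    (hh : ∀ U V : Set X, IsOpen U → IsOpen V → U.Nonempty → V.Nonempty →
      ∃ n, ∃ x ∈ U, h^[n] x ∈ V) {C : Clopens X} (hC : C ≤ clopensCongr h C) :
    C = ⊥ ∨ C = ⊤ := by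
  by_contra! hne
  obtain ⟨n, x, hx, hnx⟩ := hh C Cᶜ C.isOpen C.isClosed.isOpen_compl
    (nonempty_iff_ne_empty.2 fun hbot => hne.1 (Clopens.ext hbot))
    (nonempty_compl.2 fun htop => hne.2 (Clopens.ext htop))
  have hmaps : MapsTo h C C := hC
  exact hnx (hmaps.iterate n hx)

theorem clopensCongr_ne_compl {h : X ≃ₜ X} {x : X} (hx : h x = x) (C : Clopens X) :
    clopensCongr h C ≠ Cᶜ := fun hC => by
  have hiff : h x ∈ C ↔ x ∉ C := SetLike.ext_iff.1 hC x
  rw [hx] at hiff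
  exact iff_not_self hiff

instance instNontrivialClopens [Nonempty X] : Nontrivial (Clopens X) :=
  ⟨⊥, ⊤, fun h => empty_ne_univ (congrArg SetLike.coe h)⟩

instance instDenselyOrderedClopens [PerfectSpace X] [TotallySeparatedSpace X] :
    DenselyOrdered (Clopens X) where
  dense s t hst := by
    obtain ⟨x, hxt, hxs⟩ := SetLike.exists_of_lt hst
    have hnhds : ∀ᶠ y in 𝓝[≠] x, y ∈ t \ s :=
      mem_nhdsWithin_of_mem_nhds ((t \ s).isOpen.mem_nhds ⟨hxt, hxs⟩)
    obtain ⟨y, ⟨hyt, hys⟩, hyx⟩ := (hnhds.and eventually_mem_nhdsWithin).exists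
    obtain ⟨U, hU, hxU, hyU⟩ := exists_isClopen_of_totally_separated (Ne.symm hyx)
    let u : Clopens X := ⟨U, hU⟩
    refine ⟨s ⊔ t ⊓ u, lt_of_le_of_ne le_sup_left fun h => ?_,
      lt_of_le_of_ne (sup_le hst.le inf_le_left) fun h => ?_⟩
    · exact hxs (h ▸ Or.inr ⟨hxt, hxU⟩)
    · rw [← h] at hyt
      exact hyt.elim hys fun hy => hyU hy.2

theorem eq_of_forall_clopens [TotallySeparatedSpace X] {x y : X}
    (h : ∀ C : Clopens X, x ∈ C → y ∈ C) : x = y := by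
  by_contra hxy
  obtain ⟨U, hU, hxU, hyU⟩ := exists_isClopen_of_totally_separated hxy
  exact hyU (h ⟨U, hU⟩ hxU)

theorem exists_forall_mem_iff [CompactSpace X] (φ : Clopens X ≃o Clopens Y) (y : Y) :
    ∃ x, ∀ C, x ∈ C ↔ y ∈ φ C := by
  obtain ⟨x, hx⟩ : (⋂ C : {C : Clopens X // y ∈ φ C}, (C : Set X)).Nonempty := by
    have : Nonempty {C : Clopens X // y ∈ φ C} := ⟨⊤, by rw [φ.map_top]; trivial⟩
    refine IsCompact.nonempty_iInter_of_directed_nonempty_isCompact_isClosed _ (fun C D => ?_)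
      (fun C => ?_) (fun C => C.1.isClosed.isCompact) fun C => C.1.isClosed
    · exact ⟨⟨C ⊓ D, by rw [φ.map_inf]; exact ⟨C.2, D.2⟩⟩, inf_le_left, inf_le_right⟩
    · refine nonempty_iff_ne_empty.2 fun hC => ?_
      have hy : y ∈ φ ⊥ := Clopens.ext (t := ⊥) hC ▸ C.2
      rw [φ.map_bot] at hy
      exact hy
  have himp (C : Clopens X) (hC : y ∈ φ C) : x ∈ C := mem_iInter.1 hx ⟨C, hC⟩
  refine ⟨x, fun C => ⟨not_imp_not.1 fun hC hxC => ?_, himp C⟩⟩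
  exact himp Cᶜ (by rwa [map_compl']) hxC

variable [CompactSpace X] [T2Space X] [TotallyDisconnectedSpace X]

theorem continuous_of_forall_clopens {f : Y → X} {φ : Clopens X → Clopens Y}
    (hf : ∀ y C, f y ∈ C ↔ y ∈ φ C) : Continuous f :=
  isTopologicalBasis_isClopen.continuous_iff.2 fun U hU => by
    have hpre : f ⁻¹' U = φ ⟨U, hU⟩ := ext fun y => hf y ⟨U, hU⟩
    exact hpre ▸ (φ ⟨U, hU⟩).isOpen

theorem exists_homeomorph_dual [CompactSpace Y] [T2Space Y] [TotallyDisconnectedSpace Y]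
    (φ : Clopens X ≃o Clopens Y) : ∃ h : Y ≃ₜ X, clopensCongr h = φ := by
  choose f hf using exists_forall_mem_iff φ
  choose g hg using exists_forall_mem_iff φ.symm
  refine ⟨{
    toFun := f
    invFun := g
    left_inv := fun y => eq_of_forall_clopens fun C hC => by
      simpa [hf, hg] using hC
    right_inv := fun x => eq_of_forall_clopens fun C hC => by
      simpa [hf, hg] using hC
    continuous_toFun := continuous_of_forall_clopens hf
    continuous_invFun := continuous_of_forall_clopens hg }, ?_⟩
  ext C y
  exact hf y C

end Clopens

section Conj

variable {A B : Type*} [BooleanAlgebra A] [BooleanAlgebra B] {φ : A ≃o A} (e : A ≃o B)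

theorem eq_bot_or_eq_top_of_le_conj (hφ : ∀ a, a ≤ φ a → a = ⊥ ∨ a = ⊤) {b : B}
    (hb : b ≤ e (φ (e.symm b))) : b = ⊥ ∨ b = ⊤ := by
  simpa using hφ (e.symm b) (e.symm_apply_le.2 hb)

theorem conj_ne_compl (hφ : ∀ a, φ a ≠ aᶜ) (b : B) : e (φ (e.symm b)) ≠ bᶜ := fun hb =>
  hφ (e.symm b) (by rw [← map_compl' e.symm b, ← hb, e.symm_apply_apply])

end Conj

section FullShift

variable {ι S : Type*} [TopologicalSpace S]

theorem tendsto_pi_of_eventually_eq {α : Type*} {l : Filter α} {z : α → ι → S} {x : ι → S}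
    (hz : ∀ i, ∀ᶠ a in l, z a i = x i) : Tendsto z l (𝓝 x) :=
  tendsto_pi_nhds.2 fun i => tendsto_nhds_of_eventually_eq (hz i)

instance instPerfectSpacePi [Infinite ι] [Nontrivial S] : PerfectSpace (ι → S) := by
  classical
  refine perfectSpace_iff_forall_not_isolated.2 fun x => ?_
  choose c hc using fun i => exists_ne (x i)
  have htendsto : Tendsto (fun i => Function.update x i (c i)) cofinite (𝓝 x) :=
    tendsto_pi_of_eventually_eq fun j => (eventually_cofinite_ne j).mono fun i hij =>
      Function.update_of_ne hij.symm _ _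
  exact (tendsto_nhdsWithin_iff.2 ⟨htendsto, .of_forall fun i =>
    Function.update_ne_self_iff.2 (hc i)⟩).neBot

variable (S) in
/-- The full shift on bi-infinite sequences over the alphabet `S`. -/
def fullShift : (ℤ → S) ≃ₜ (ℤ → S) where
  toFun x i := x (i + 1)
  invFun x i := x (i - 1)
  left_inv x := by simp
  right_inv x := by simp

theorem fullShift_iterate_apply (n : ℕ) (x : ℤ → S) (i : ℤ) :
    (fullShift S)^[n] x i = x (i + n) := by
  induction n generalizing i with
  | zero => simp
  | succ n ih =>
    rw [Function.iterate_succ_apply', Nat.cast_succ, add_comm (n : ℤ), ← add_assoc]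
    exact ih (i + 1)

theorem exists_fullShift_iterate_mem (U V : Set (ℤ → S)) (hU : IsOpen U) (hV : IsOpen V)
    (hUne : U.Nonempty) (hVne : V.Nonempty) : ∃ n, ∃ x ∈ U, (fullShift S)^[n] x ∈ V := by
  obtain ⟨x, hx⟩ := hUne
  obtain ⟨y, hy⟩ := hVne
  -- A point that looks like `x` around `0` and like `y` around `2 * N`.
  let z (N : ℕ) (i : ℤ) : S := if i ≤ N then x i else y (i - 2 * N)
  have hzx : Tendsto z atTop (𝓝 x) := tendsto_pi_of_eventually_eq fun i => by
    filter_upwards [eventually_ge_atTop i.toNat] with N hN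
    exact if_pos (by omega)
  have hzy : Tendsto (fun N => (fullShift S)^[2 * N] (z N)) atTop (𝓝 y) :=
    tendsto_pi_of_eventually_eq fun i => by
      filter_upwards [eventually_gt_atTop (-i).toNat] with N hN
      rw [fullShift_iterate_apply]
      exact (if_neg (by push_cast; omega)).trans (by simp)
  obtain ⟨N, hNx, hNy⟩ :=
    ((hzx.eventually_mem (hU.mem_nhds hx)).and (hzy.eventually_mem (hV.mem_nhds hy))).exists
  exact ⟨2 * N, z N, hNx, hNy⟩

end FullShift

section NStar

open TopologicalSpace

theorem isClosed_NStar : IsClosed NStar := by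
  have hNStar : NStar = ⋂ s ∈ (cofinite : Filter ℕ), {p : βN | s ∈ p} := by
    ext p
    simp only [mem_iInter]
    rfl
  rw [hNStar]
  exact isClosed_biInter fun s _ => ultrafilter_isClosed_basic s

instance instCompactSpaceNStar : CompactSpace NStar :=
  isCompact_iff_compactSpace.1 isClosed_NStar.isCompact

/-- The clopen subset `A* = {p ∈ ℕ* | A ∈ p}` of `ℕ*`. -/
def starClopen (A : Set ℕ) : Clopens NStar :=
  ⟨starSet A, IsClopen.preimage ⟨ultrafilter_isClosed_basic A, ultrafilter_isOpen_basic A⟩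
    continuous_subtype_val⟩

theorem starClopen_le_starClopen {A B : Set ℕ} :
    starClopen A ≤ starClopen B ↔ ∀ᶠ k in cofinite, k ∈ A → k ∈ B := by
  refine ⟨fun hAB => ?_, fun hAB p hA => ?_⟩
  · refine mem_iff_ultrafilter.2 fun p hp => ?_
    by_cases hA : A ∈ p
    · exact mem_of_superset (@hAB ⟨p, hp⟩ hA) fun k hk _ => hk
    · exact mem_of_superset (Ultrafilter.compl_mem_iff_notMem.2 hA) fun k hk hkA => (hk hkA).elim
  · exact mp_mem hA (p.2 hAB)

theorem isTopologicalBasis_range_starSet : IsTopologicalBasis (range starSet) := by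
  have hrange : range starSet = preimage Subtype.val '' ultrafilterBasis ℕ :=
    range_comp (preimage Subtype.val) fun A : Set ℕ => {p : βN | A ∈ p}
  exact hrange ▸ ultrafilterBasis_is_basis.induced Subtype.val

theorem exists_starClopen_eq (C : Clopens NStar) : ∃ A, starClopen A = C := by
  obtain ⟨F, hF, hCF⟩ := eq_finite_iUnion_of_isTopologicalBasis_of_isCompact_open _
    isTopologicalBasis_range_starSet C C.isClosed.isCompact C.isOpen
  refine ⟨⋃ A ∈ F, A, Clopens.ext (hCF ▸ ext fun p => ?_)⟩
  simp only [mem_iUnion₂, exists_prop]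
  exact Ultrafilter.finite_biUnion_mem_iff hF

theorem nonempty_germ_orderIso_clopens_NStar :
    Nonempty (Germ (cofinite : Filter ℕ) Prop ≃o Clopens NStar) := by
  refine nonempty_orderIso_of_biTotal
    (r := fun a C => ∃ f : ℕ → Prop, (f : Germ cofinite Prop) = a ∧ starClopen {k | f k} = C)
    ⟨fun a => a.inductionOn fun f => ⟨_, f, rfl, rfl⟩, fun C => ?_⟩ ?_
  · obtain ⟨A, rfl⟩ := exists_starClopen_eq C
    exact ⟨_, (· ∈ A), rfl, rfl⟩
  · rintro _ _ _ _ ⟨f, rfl, rfl⟩ ⟨g, rfl, rfl⟩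
    exact starClopen_le_starClopen.symm

theorem shiftStar_mem_starClopen_even {p : NStar} :
    shiftStar p ∈ starClopen {k | Even k} ↔ p ∉ starClopen {k | Even k} := by
  have hpre : (· + 1) ⁻¹' {k : ℕ | Even k} = {k | Even k}ᶜ := by
    ext k
    exact Nat.even_add_one
  change (· + 1) ⁻¹' {k : ℕ | Even k} ∈ p.1 ↔ {k | Even k} ∉ p.1
  rw [hpre, Ultrafilter.compl_mem_iff_notMem]

theorem exists_orderIso_clopens_NStar (hCH : 𝔠 = (ℵ₁ : Cardinal.{0})) :
    ∃ ψ : Clopens NStar ≃o Clopens NStar, (∀ C, C ≤ ψ C → C = ⊥ ∨ C = ⊤) ∧ ∀ C, ψ C ≠ Cᶜ := by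
  have : Countable (Clopens (ℤ → Bool)) := Clopens.countable_iff_secondCountable.2 inferInstance
  have hcofinite : HasDiagonals.{0} cofinite := by
    rw [Nat.cofinite_eq_atTop]
    exact hasDiagonals_atTop
  have hhyperfilter : HasDiagonals.{0} (hyperfilter ℕ : Filter ℕ) :=
    hasDiagonals_ultrafilter _ Nat.hyperfilter_le_atTop
  let φ := germCongr (hyperfilter ℕ : Filter ℕ) (clopensCongr (fullShift Bool))
  have hφ : ∀ a, a ≤ φ a → a = ⊥ ∨ a = ⊤ := fun _ =>
    eq_bot_or_eq_top_of_le_germCongr fun _ =>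
      eq_bot_or_eq_top_of_le_clopensCongr exists_fullShift_iterate_mem
  have hφ' : ∀ a, φ a ≠ aᶜ :=
    germCongr_ne_compl (clopensCongr_ne_compl (x := fun _ => false) rfl)
  obtain ⟨e₁⟩ : Nonempty (Germ (hyperfilter ℕ : Filter ℕ) (Clopens (ℤ → Bool)) ≃o
      Germ (cofinite : Filter ℕ) Prop) :=
    nonempty_orderIso_of_countablySaturated
      hhyperfilter.countablySaturated_germ hcofinite.countablySaturated_germ
      ((mk_germ_le_continuum (mk_le_aleph0.trans aleph0_le_continuum)).trans_eq hCH)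
      ((mk_germ_le_continuum (mk_Prop.trans_le (nat_lt_continuum 2).le)).trans_eq hCH)
  obtain ⟨e₂⟩ := nonempty_germ_orderIso_clopens_NStar
  let e := e₁.trans e₂
  exact ⟨e.symm.trans (φ.trans e), fun _ => eq_bot_or_eq_top_of_le_conj e hφ, conj_ne_compl e hφ'⟩

theorem not_semiconj_shiftStar {τ : NStar ≃ₜ NStar} (hτ : ∀ C, clopensCongr τ C ≠ Cᶜ)
    (h : NStar ≃ₜ NStar) : ¬ Function.Semiconj h shiftStar τ := by
  intro hh
  have hpre {q : NStar} {C : Clopens NStar} : h q ∈ clopensCongr h.symm C ↔ q ∈ C := by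
    rw [mem_clopensCongr, h.symm_apply_apply]
  refine hτ (clopensCongr h.symm (starClopen {k | Even k})) (SetLike.ext fun p => ?_)
  obtain ⟨q, rfl⟩ := h.surjective p
  rw [mem_clopensCongr, ← hh q, hpre, shiftStar_mem_starClopen_even, ← hpre]
  rfl

end NStar

end ParovicenkoShift

/-- Under CH (`2^ℵ₀ = ℵ₁`) there is a chain transitive
autohomeomorphism `τ` of `ℕ*` not isomorphic to the shift `(ℕ*, σ)`. -/
theorem stmt19 (hCH : (2 : Cardinal) ^ Cardinal.aleph0 = Cardinal.aleph 1) :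
    ∃ τ : ↥NStar ≃ₜ ↥NStar, ChainTransitive (⇑τ) ∧
      ¬ ∃ h : ↥NStar ≃ₜ ↥NStar, ∀ p : ↥NStar, h (shiftStar p) = τ (h p) := by
  have hCH₀ : Cardinal.continuum.{0} = Cardinal.aleph 1 := by
    apply Cardinal.lift_injective
    simpa using hCH
  obtain ⟨ψ, hψ, hψ'⟩ := ParovicenkoShift.exists_orderIso_clopens_NStar hCH₀
  obtain ⟨τ, rfl⟩ := ParovicenkoShift.exists_homeomorph_dual ψ
  exact ⟨τ, ParovicenkoShift.chainTransitive_of_clopens hψ,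
    fun ⟨h, hh⟩ => ParovicenkoShift.not_semiconj_shiftStar hψ' h hh⟩

end
end
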